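/- arXiv:0908.3274 — 2 statements merged into one kernel-verified Lean document; each statement's English description precedes it below -/
import Mathlib

section
/- Let Σ ⊆ ℂ be open and connected and let u : Σ → ℝ, Q : Σ → ℂ, H : Σ → ℝ be smooth. For λ ∈ ℂ\{0} define Û(λ) = (1/2)[[u_z, -2H e^u λ⁻¹],[Q e^{-u} λ⁻¹, -u_z]] and V̂(λ) = (1/2)[[-u_{z̄}, -Q̄ e^{-u} λ],[2H e^u λ, u_{z̄}]]. Then the zero-curvature equation ∂_z V̂(λ) - ∂_{z̄} Û(λ) + [Û(λ), V̂(λ)] = 0 holds on Σ for every λ ∈ ℂ\{0} if and only if both of the following hold: (i) the zero-curvature equation holds at λ = 1, and (ii) H is constant on Σ. -/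
open Matrix Complex

noncomputable section

attribute [local instance] Matrix.linftyOpNormedAddCommGroup Matrix.linftyOpNormedSpace
  Matrix.linftyOpNormedRing Matrix.linftyOpNormedAlgebra

/-- The space of 2×2 complex matrices. -/
abbrev M2 : Type := Matrix (Fin 2) (Fin 2) ℂ

/-- Basis vector `e₁` of su(2). -/
def e1 : M2 := !![0, -Complex.I; -Complex.I, 0]

/-- Basis vector `e₂` of su(2). -/
def e2 : M2 := !![0, 1; -1, 0]

/-- Basis vector `e₃` of su(2). -/
def e3 : M2 := !![Complex.I, 0; 0, -Complex.I]

/-- The inner product `⟨X,Y⟩ = -(1/2) tr (XY)` identifying su(2) with E³. -/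
def ip (X Y : M2) : ℂ := -(1/2 : ℂ) * (X * Y).trace

/-- Partial derivative in the `x`-direction. -/
def px (f : ℂ → M2) (z : ℂ) : M2 := fderiv ℝ f z 1

/-- Partial derivative in the `y`-direction. -/
def py (f : ℂ → M2) (z : ℂ) : M2 := fderiv ℝ f z Complex.I

/-- Wirtinger derivative `∂_z = (1/2)(∂_x - i ∂_y)`. -/
def dz (f : ℂ → M2) (z : ℂ) : M2 := (2:ℂ)⁻¹ • (px f z - Complex.I • py f z)

/-- Wirtinger derivative `∂_z̄ = (1/2)(∂_x + i ∂_y)`. -/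
def dzb (f : ℂ → M2) (z : ℂ) : M2 := (2:ℂ)⁻¹ • (px f z + Complex.I • py f z)

/-- `x`-derivative of a real-valued function on ℂ. -/
def pxR (u : ℂ → ℝ) (z : ℂ) : ℝ := fderiv ℝ u z 1

/-- `y`-derivative of a real-valued function on ℂ. -/
def pyR (u : ℂ → ℝ) (z : ℂ) : ℝ := fderiv ℝ u z Complex.I

/-- Wirtinger derivative `u_z` of a real-valued function. -/
def dzR (u : ℂ → ℝ) (z : ℂ) : ℂ := (2:ℂ)⁻¹ * ((pxR u z : ℂ) - Complex.I * (pyR u z : ℂ))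

/-- Wirtinger derivative `u_z̄` of a real-valued function. -/
def dzbR (u : ℂ → ℝ) (z : ℂ) : ℂ := (2:ℂ)⁻¹ * ((pxR u z : ℂ) + Complex.I * (pyR u z : ℂ))

/-- `x`-derivative of a complex-valued function on ℂ. -/
def pxC (q : ℂ → ℂ) (z : ℂ) : ℂ := fderiv ℝ q z 1

/-- `y`-derivative of a complex-valued function on ℂ. -/
def pyC (q : ℂ → ℂ) (z : ℂ) : ℂ := fderiv ℝ q z Complex.I

/-- Wirtinger derivative `∂_z` of a complex-valued function. -/
def dzC (q : ℂ → ℂ) (z : ℂ) : ℂ := (2:ℂ)⁻¹ * (pxC q z - Complex.I * pyC q z)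

/-- Wirtinger derivative `∂_z̄` of a complex-valued function. -/
def dzbC (q : ℂ → ℂ) (z : ℂ) : ℂ := (2:ℂ)⁻¹ * (pxC q z + Complex.I * pyC q z)

/-!
The diagonal of the curvature does not involve `λ`: it is the Gauss equation. The off-diagonal
entries are the Codazzi equations `2 e^{2u} H_z̄ = λ² Q̄_z` and `2 λ² e^{2u} H_z = Q_z̄`, in which
`λ` multiplies only one side. Comparing two values of `λ²` forces `H_z = H_z̄ = 0`; conversely, once
these vanish, `λ` drops out. The computation is carried out for complex-valued `u` and `H`, with a
function `P` in the role of `Q̄`.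
-/

section FDeriv

variable {𝕜 E F m n : Type*} [NontriviallyNormedField 𝕜] [NormedAddCommGroup E] [NormedSpace 𝕜 E]
  [NormedAddCommGroup F] [NormedSpace 𝕜 F]

lemma differentiableAt_matrix [Finite n] {f : E → Matrix m n F} {x : E} :
    DifferentiableAt 𝕜 f x ↔ ∀ i j, DifferentiableAt 𝕜 (fun y => f y i j) x := by
  have := Fintype.ofFinite n
  exact differentiableAt_pi.trans (forall_congr' fun _ => differentiableAt_pi)

lemma fderiv_matrix_apply [Finite n] {f : E → Matrix m n F} {x : E}
    (hf : DifferentiableAt 𝕜 f x) (v : E) (i : m) (j : n) :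
    fderiv 𝕜 f x v i j = fderiv 𝕜 (fun y => f y i j) x v := by
  have := Fintype.ofFinite n
  have hrow := hasFDerivAt_pi'.1 hf.hasFDerivAt i
  have hentry := hasFDerivAt_pi'.1 hrow j
  rw [hentry.fderiv]
  rfl

lemma forall_eq_iff_fderiv_eq_zero [NormedSpace ℝ E] [IsRCLikeNormedField 𝕜]
    {f : E → F} {s : Set E} (hs : IsOpen s) (hs' : IsPreconnected s) (hf : DifferentiableOn 𝕜 f s) :
    (∀ x ∈ s, ∀ y ∈ s, f x = f y) ↔ ∀ x ∈ s, fderiv 𝕜 f x = 0 := by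
  refine ⟨fun hconst x hx => ?_, fun hzero x hx y hy =>
    hs.is_const_of_fderiv_eq_zero hs' hf hzero hx hy⟩
  have hlocal : f =ᶠ[nhds x] fun _ => f x := by
    filter_upwards [hs.mem_nhds hx] with y hy using hconst y hy x hx
  rw [hlocal.fderiv_eq, fderiv_fun_const, Pi.zero_apply]

lemma fderiv_const_mul_mul_cexp [NormedAlgebra 𝕜 ℂ] {f g : E → ℂ} {x : E}
    (hf : DifferentiableAt 𝕜 f x) (hg : DifferentiableAt 𝕜 g x) (k : ℂ) (v : E) :
    fderiv 𝕜 (fun y => k * f y * exp (g y)) x v =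
      k * (fderiv 𝕜 f x v + f x * fderiv 𝕜 g x v) * exp (g x) := by
  have h := (hf.hasFDerivAt.const_mul k).fun_mul hg.hasFDerivAt.cexp
  rw [h.fderiv]
  simp only [_root_.add_apply, _root_.smul_apply, smul_eq_mul]
  ring

lemma fderiv_ofReal_apply [NormedSpace ℝ E] (f : E → ℝ) (x v : E) :
    fderiv ℝ (fun y => (f y : ℂ)) x v = fderiv ℝ f x v := by
  by_cases hf : DifferentiableAt ℝ f x
  · have h : HasFDerivAt (fun y => (f y : ℂ)) (ofRealCLM.comp (fderiv ℝ f x)) x :=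
      ofRealCLM.hasFDerivAt.comp x hf.hasFDerivAt
    simp [h.fderiv]
  · have hf' : ¬DifferentiableAt ℝ (fun y => (f y : ℂ)) x := fun h =>
      hf (reCLM.differentiableAt.comp x h)
    simp [fderiv_zero_of_not_differentiableAt hf, fderiv_zero_of_not_differentiableAt hf']

end FDeriv

section Wirtinger

variable {f g u : ℂ → ℂ} {z : ℂ}

lemma dz_apply {A : ℂ → M2} (hA : DifferentiableAt ℝ A z) (i j : Fin 2) :
    dz A z i j = dzC (fun w => A w i j) z := by
  simp [dz, dzC, px, py, pxC, pyC, fderiv_matrix_apply hA]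

lemma dzb_apply {A : ℂ → M2} (hA : DifferentiableAt ℝ A z) (i j : Fin 2) :
    dzb A z i j = dzbC (fun w => A w i j) z := by
  simp [dzb, dzbC, px, py, pxC, pyC, fderiv_matrix_apply hA]

lemma dzC_const_mul (k : ℂ) : dzC (fun w => k * f w) z = k * dzC f z := by
  have h : fderiv ℝ (fun w => k * f w) z = k • fderiv ℝ f z :=
    congrFun (fderiv_const_smul_field k) z
  simp only [dzC, pxC, pyC, h, _root_.smul_apply, smul_eq_mul]
  ring

lemma dzbC_const_mul (k : ℂ) : dzbC (fun w => k * f w) z = k * dzbC f z := by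
  have h : fderiv ℝ (fun w => k * f w) z = k • fderiv ℝ f z :=
    congrFun (fderiv_const_smul_field k) z
  simp only [dzbC, pxC, pyC, h, _root_.smul_apply, smul_eq_mul]
  ring

lemma dzC_neg : dzC (fun w => -f w) z = -dzC f z := by
  simp only [dzC, pxC, pyC, fderiv_fun_neg, _root_.neg_apply]
  ring

lemma dzbC_neg : dzbC (fun w => -f w) z = -dzbC f z := by
  simp only [dzbC, pxC, pyC, fderiv_fun_neg, _root_.neg_apply]
  ring

lemma dzC_const_mul_mul_cexp (hf : DifferentiableAt ℝ f z) (hg : DifferentiableAt ℝ g z) (k : ℂ) :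
    dzC (fun w => k * f w * exp (g w)) z = k * (dzC f z + f z * dzC g z) * exp (g z) := by
  simp only [dzC, pxC, pyC, fderiv_const_mul_mul_cexp hf hg]
  ring

lemma dzbC_const_mul_mul_cexp (hf : DifferentiableAt ℝ f z) (hg : DifferentiableAt ℝ g z) (k : ℂ) :
    dzbC (fun w => k * f w * exp (g w)) z = k * (dzbC f z + f z * dzbC g z) * exp (g z) := by
  simp only [dzbC, pxC, pyC, fderiv_const_mul_mul_cexp hf hg]
  ring

lemma dzC_ofReal (v : ℂ → ℝ) (z : ℂ) : dzC (fun w => (v w : ℂ)) z = dzR v z := by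
  simp only [dzC, dzR, pxC, pyC, pxR, pyR, fderiv_ofReal_apply]

lemma dzbC_ofReal (v : ℂ → ℝ) (z : ℂ) : dzbC (fun w => (v w : ℂ)) z = dzbR v z := by
  simp only [dzbC, dzbR, pxC, pyC, pxR, pyR, fderiv_ofReal_apply]

lemma fderiv_eq_zero_iff_dzC_eq_zero_and_dzbC_eq_zero :
    fderiv ℝ f z = 0 ↔ dzC f z = 0 ∧ dzbC f z = 0 := by
  refine ⟨fun h => by simp [dzC, dzbC, pxC, pyC, h], fun ⟨hz, hzb⟩ => ?_⟩
  have hx : fderiv ℝ f z 1 = 0 := by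
    simp only [dzC, dzbC, pxC, pyC] at hz hzb
    linear_combination hz + hzb
  have hy : fderiv ℝ f z I = 0 := by
    simp only [dzC, dzbC, pxC, pyC] at hz hzb
    linear_combination I * (hz - hzb) + fderiv ℝ f z I * I_sq
  exact ContinuousLinearMap.coe_injective (basisOneI.ext fun i => by fin_cases i <;> simpa)

lemma differentiableAt_dzC (hu : ContDiffAt ℝ 2 u z) : DifferentiableAt ℝ (dzC u) z := by
  have hu' : DifferentiableAt ℝ (fderiv ℝ u) z :=
    (hu.fderiv_right (m := 1) (by norm_num)).differentiableAt (by simp)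
  unfold dzC pxC pyC
  fun_prop

lemma differentiableAt_dzbC (hu : ContDiffAt ℝ 2 u z) : DifferentiableAt ℝ (dzbC u) z := by
  have hu' : DifferentiableAt ℝ (fderiv ℝ u) z :=
    (hu.fderiv_right (m := 1) (by norm_num)).differentiableAt (by simp)
  unfold dzbC pxC pyC
  fun_prop

end Wirtinger

/-- The curvature `∂_z V - ∂_z̄ U + [U, V]` of the connection `d + U dz + V dz̄`. -/
def laxCurvature (U V : ℂ → M2) (z : ℂ) : M2 :=
  dz V z - dzb U z + (U z * V z - V z * U z)

/-- The `dz`-component `Û(l)` of the Lax pair, for complex-valued `u` and `H`. -/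
def laxU (u Q H : ℂ → ℂ) (l z : ℂ) : M2 := (2:ℂ)⁻¹ •
  !![dzC u z, -2 * H z * exp (u z) * l⁻¹;
     Q z * exp (-u z) * l⁻¹, -dzC u z]

/-- The `dz̄`-component `V̂(l)` of the Lax pair, for complex-valued `u` and `H`, with an arbitrary
function `P` in place of the conjugate of `Q`. -/
def laxV (u P H : ℂ → ℂ) (l z : ℂ) : M2 := (2:ℂ)⁻¹ •
  !![-dzbC u z, -P z * exp (-u z) * l;
     2 * H z * exp (u z) * l, dzbC u z]

/-- The difference of the two sides of the Gauss equation `u_{zz̄} + H² e^{2u} = Q P e^{-2u} / 4`,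
where `u_{zz̄}` is the average of the two mixed derivatives. -/
def gaussDefect (u Q P H : ℂ → ℂ) (z : ℂ) : ℂ :=
  4⁻¹ * (Q z * P z) * exp (-u z) ^ 2 - H z ^ 2 * exp (u z) ^ 2 -
    2⁻¹ * (dzC (dzbC u) z + dzbC (dzC u) z)

section LaxPair

variable {u Q P H : ℂ → ℂ} {l z : ℂ}

lemma dzb_laxU (hu : ContDiffAt ℝ 2 u z) (hQ : DifferentiableAt ℝ Q z)
    (hH : DifferentiableAt ℝ H z) (l : ℂ) :
    dzb (laxU u Q H l) z = (2:ℂ)⁻¹ •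
      !![dzbC (dzC u) z, -2 * (dzbC H z + H z * dzbC u z) * exp (u z) * l⁻¹;
         (dzbC Q z - Q z * dzbC u z) * exp (-u z) * l⁻¹, -dzbC (dzC u) z] := by
  have hu₁ : DifferentiableAt ℝ u z := hu.differentiableAt two_ne_zero
  have hu₂ : DifferentiableAt ℝ (dzC u) z := differentiableAt_dzC hu
  have hU : laxU u Q H l = fun w => !![2⁻¹ * dzC u w, -l⁻¹ * H w * exp (u w);
      2⁻¹ * l⁻¹ * Q w * exp (-u w), -2⁻¹ * dzC u w] := by
    ext w i j
    fin_cases i <;> fin_cases j <;> simp [laxU] <;> ring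
  have hdiff : DifferentiableAt ℝ (laxU u Q H l) z := by
    rw [hU, differentiableAt_matrix]
    intro i j
    fin_cases i <;> fin_cases j <;> dsimp <;> fun_prop
  ext i j
  rw [dzb_apply hdiff, hU]
  fin_cases i <;> fin_cases j <;>
    simp [dzbC_const_mul, dzbC_const_mul_mul_cexp hH hu₁, dzbC_const_mul_mul_cexp hQ hu₁.fun_neg,
      dzbC_neg] <;> ring

lemma dz_laxV (hu : ContDiffAt ℝ 2 u z) (hP : DifferentiableAt ℝ P z)
    (hH : DifferentiableAt ℝ H z) (l : ℂ) :
    dz (laxV u P H l) z = (2:ℂ)⁻¹ •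
      !![-dzC (dzbC u) z, -(dzC P z - P z * dzC u z) * exp (-u z) * l;
         2 * (dzC H z + H z * dzC u z) * exp (u z) * l, dzC (dzbC u) z] := by
  have hu₁ : DifferentiableAt ℝ u z := hu.differentiableAt two_ne_zero
  have hu₂ : DifferentiableAt ℝ (dzbC u) z := differentiableAt_dzbC hu
  have hV : laxV u P H l = fun w => !![-2⁻¹ * dzbC u w, -2⁻¹ * l * P w * exp (-u w);
      l * H w * exp (u w), 2⁻¹ * dzbC u w] := by
    ext w i j
    fin_cases i <;> fin_cases j <;> simp [laxV] <;> ring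
  have hdiff : DifferentiableAt ℝ (laxV u P H l) z := by
    rw [hV, differentiableAt_matrix]
    intro i j
    fin_cases i <;> fin_cases j <;> dsimp <;> fun_prop
  ext i j
  rw [dz_apply hdiff, hV]
  fin_cases i <;> fin_cases j <;>
    simp [dzC_const_mul, dzC_const_mul_mul_cexp hH hu₁, dzC_const_mul_mul_cexp hP hu₁.fun_neg,
      dzC_neg] <;> ring

lemma laxCurvature_laxU_laxV (hu : ContDiffAt ℝ 2 u z) (hQ : DifferentiableAt ℝ Q z)
    (hP : DifferentiableAt ℝ P z) (hH : DifferentiableAt ℝ H z) (hl : l ≠ 0) :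
    laxCurvature (laxU u Q H l) (laxV u P H l) z =
      !![gaussDefect u Q P H z,
          (2 * l * exp (u z))⁻¹ * (2 * exp (u z) ^ 2 * dzbC H z - l ^ 2 * dzC P z);
         (2 * l * exp (u z))⁻¹ * (l ^ 2 * (2 * exp (u z) ^ 2 * dzC H z) - dzbC Q z),
          -gaussDefect u Q P H z] := by
  rw [laxCurvature, dzb_laxU hu hQ hH, dz_laxV hu hP hH, laxU, laxV]
  ext i j
  fin_cases i <;> fin_cases j <;> simp [gaussDefect, exp_neg] <;> field_simp <;> ring

lemma laxCurvature_eq_zero_iff (hu : ContDiffAt ℝ 2 u z) (hQ : DifferentiableAt ℝ Q z)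
    (hP : DifferentiableAt ℝ P z) (hH : DifferentiableAt ℝ H z) (hl : l ≠ 0) :
    laxCurvature (laxU u Q H l) (laxV u P H l) z = 0 ↔
      gaussDefect u Q P H z = 0 ∧ 2 * exp (u z) ^ 2 * dzbC H z = l ^ 2 * dzC P z ∧
        l ^ 2 * (2 * exp (u z) ^ 2 * dzC H z) = dzbC Q z := by
  have hscale : (2 * l * exp (u z))⁻¹ ≠ 0 := by simp [hl]
  rw [laxCurvature_laxU_laxV hu hQ hP hH hl, ← Matrix.ext_iff]
  simp only [Fin.forall_fin_two, of_apply, cons_val', cons_val_zero, cons_val_one,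
    cons_val_fin_one, Matrix.zero_apply, neg_eq_zero, mul_eq_zero_iff_left hscale, sub_eq_zero]
  tauto

lemma forall_laxCurvature_eq_zero_iff (hu : ContDiffAt ℝ 2 u z) (hQ : DifferentiableAt ℝ Q z)
    (hP : DifferentiableAt ℝ P z) (hH : DifferentiableAt ℝ H z) :
    (∀ l : ℂ, l ≠ 0 → laxCurvature (laxU u Q H l) (laxV u P H l) z = 0) ↔
      laxCurvature (laxU u Q H 1) (laxV u P H 1) z = 0 ∧ fderiv ℝ H z = 0 := by
  have hexp : 2 * exp (u z) ^ 2 ≠ 0 := by simp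
  rw [fderiv_eq_zero_iff_dzC_eq_zero_and_dzbC_eq_zero]
  constructor
  · intro hloop
    obtain ⟨-, hP₁, hQ₁⟩ := (laxCurvature_eq_zero_iff hu hQ hP hH one_ne_zero).1
      (hloop 1 one_ne_zero)
    obtain ⟨-, hP₂, hQ₂⟩ := (laxCurvature_eq_zero_iff hu hQ hP hH two_ne_zero).1
      (hloop 2 two_ne_zero)
    refine ⟨hloop 1 one_ne_zero, ?_, ?_⟩
    · refine (mul_eq_zero.1 ?_).resolve_left hexp
      linear_combination (hQ₂ - hQ₁) / 3
    · refine (mul_eq_zero.1 ?_).resolve_left hexp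
      linear_combination (4 * hP₁ - hP₂) / 3
  · rintro ⟨hone, hHz, hHzb⟩ l hl
    rw [laxCurvature_eq_zero_iff hu hQ hP hH one_ne_zero] at hone
    rw [laxCurvature_eq_zero_iff hu hQ hP hH hl]
    simpa [hHz, hHzb, hl, eq_comm (a := (0 : ℂ))] using hone

theorem loop_zero_curvature_iff_cmc_general {S : Set ℂ} (hS : IsOpen S) (hSconn : IsPreconnected S)
    (hu : ContDiffOn ℝ 2 u S) (hQ : DifferentiableOn ℝ Q S) (hP : DifferentiableOn ℝ P S)
    (hH : DifferentiableOn ℝ H S) :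
    (∀ l : ℂ, l ≠ 0 → ∀ z ∈ S, laxCurvature (laxU u Q H l) (laxV u P H l) z = 0) ↔
      (∀ z ∈ S, laxCurvature (laxU u Q H 1) (laxV u P H 1) z = 0) ∧
        ∀ z ∈ S, ∀ w ∈ S, H z = H w := by
  rw [forall_eq_iff_fderiv_eq_zero hS hSconn hH, ← forall₂_and]
  have hpointwise (z : ℂ) (hz : z ∈ S) :
      (∀ l : ℂ, l ≠ 0 → laxCurvature (laxU u Q H l) (laxV u P H l) z = 0) ↔
        laxCurvature (laxU u Q H 1) (laxV u P H 1) z = 0 ∧ fderiv ℝ H z = 0 :=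
    have hSz := hS.mem_nhds hz
    forall_laxCurvature_eq_zero_iff (hu.contDiffAt hSz) (hQ.differentiableAt hSz)
      (hP.differentiableAt hSz) (hH.differentiableAt hSz)
  rw [← forall₂_congr hpointwise]
  exact ⟨fun h z hz l hl => h l hl z hz, fun h l hl z hz => h z hz l hl⟩

lemma laxU_ofReal (u : ℂ → ℝ) (Q : ℂ → ℂ) (H : ℂ → ℝ) (l z : ℂ) :
    laxU (fun w => u w) Q (fun w => H w) l z = (2:ℂ)⁻¹ •
      !![dzR u z, -2 * (H z : ℂ) * (Real.exp (u z) : ℂ) * l⁻¹;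
         Q z * (Real.exp (-(u z)) : ℂ) * l⁻¹, -(dzR u z)] := by
  simp only [laxU, dzC_ofReal, ofReal_exp, ofReal_neg]

lemma laxV_ofReal (u : ℂ → ℝ) (P : ℂ → ℂ) (H : ℂ → ℝ) (l z : ℂ) :
    laxV (fun w => u w) P (fun w => H w) l z = (2:ℂ)⁻¹ •
      !![-(dzbR u z), -(P z) * (Real.exp (-(u z)) : ℂ) * l;
         2 * (H z : ℂ) * (Real.exp (u z) : ℂ) * l, dzbR u z] := by
  simp only [laxV, dzbC_ofReal, ofReal_exp, ofReal_neg]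

end LaxPair

/-- the λ-family zero-curvature equation holds for all λ ≠ 0 iff it
holds at λ = 1 and the mean curvature function `H` is constant. -/
theorem loop_zero_curvature_iff_cmc
    (S : Set ℂ) (hS : IsOpen S) (hSconn : IsConnected S)
    (u : ℂ → ℝ) (Q : ℂ → ℂ) (H : ℂ → ℝ)
    (hu : ContDiffOn ℝ (⊤ : ℕ∞) u S)
    (hQ : ContDiffOn ℝ (⊤ : ℕ∞) Q S)
    (hH : ContDiffOn ℝ (⊤ : ℕ∞) H S)
    (Uh Vh : ℂ → ℂ → M2)
    (hU : ∀ l : ℂ, ∀ z : ℂ, Uh l z = (2:ℂ)⁻¹ •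
      !![dzR u z, -2 * (H z : ℂ) * (Real.exp (u z) : ℂ) * l⁻¹;
         Q z * (Real.exp (-(u z)) : ℂ) * l⁻¹, -(dzR u z)])
    (hV : ∀ l : ℂ, ∀ z : ℂ, Vh l z = (2:ℂ)⁻¹ •
      !![-(dzbR u z), -((starRingEnd ℂ) (Q z)) * (Real.exp (-(u z)) : ℂ) * l;
         2 * (H z : ℂ) * (Real.exp (u z) : ℂ) * l, dzbR u z]) :
    (∀ l : ℂ, l ≠ 0 →
      ∀ z ∈ S, dz (Vh l) z - dzb (Uh l) z + (Uh l z * Vh l z - Vh l z * Uh l z) = 0) ↔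
    ((∀ z ∈ S, dz (Vh 1) z - dzb (Uh 1) z + (Uh 1 z * Vh 1 z - Vh 1 z * Uh 1 z) = 0) ∧
      (∀ z ∈ S, ∀ w ∈ S, H z = H w)) := by
  obtain rfl := funext₂ fun l z => (hU l z).trans (laxU_ofReal u Q H l z).symm
  obtain rfl := funext₂ fun l z =>
    (hV l z).trans (laxV_ofReal u (fun w => starRingEnd ℂ (Q w)) H l z).symm
  have hu₂ : ContDiffOn ℝ 2 (fun z => (u z : ℂ)) S :=
    ofRealCLM.contDiff.comp_contDiffOn (hu.of_le (by norm_cast))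
  have hQ₁ : DifferentiableOn ℝ Q S := hQ.differentiableOn (by simp)
  have hP₁ : DifferentiableOn ℝ (fun z => starRingEnd ℂ (Q z)) S :=
    conjCLE.differentiable.comp_differentiableOn hQ₁
  have hH₁ : DifferentiableOn ℝ (fun z => (H z : ℂ)) S :=
    ofRealCLM.differentiable.comp_differentiableOn (hH.differentiableOn (by simp))
  simpa only [laxCurvature, ofReal_inj] using
    loop_zero_curvature_iff_cmc_general hS hSconn.isPreconnected hu₂ hQ₁ hP₁ hH₁
end
end

section
/- Let Σ ⊆ ℂ be open, let f : Σ → su(2) be a smooth conformal immersion with conformal factor e^u and unit normal N, and suppose its mean curvature H = (1/8) e^{-2u} ⟨f_{xx} + f_{yy}, N⟩ is constant on Σ. Then the Hopf differential coefficient Q = ⟨N, f_{zz}⟩ is holomorphic on Σ, i.e. ∂_{z̄} Q = 0. -/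
open Matrix Complex

noncomputable section

attribute [local instance] Matrix.linftyOpNormedAddCommGroup Matrix.linftyOpNormedSpace
  Matrix.linftyOpNormedRing Matrix.linftyOpNormedAlgebra

/-!
Differentiating `⟨N, f_{z z̄}⟩ = H ⟨f_z, f_z̄⟩` for constant `H` gives
`⟨N, f_{z z z̄}⟩ = H ⟨f_zz, f_z̄⟩ - ⟨N_z, f_{z z̄}⟩`, so that
`Q_z̄ = ⟨N_z̄, f_zz⟩ + H ⟨f_zz, f_z̄⟩ - ⟨N_z, f_{z z̄}⟩`.
Conformality says that `f_z` and `f_z̄` are null vectors, so `f_{z z̄}` is orthogonal to both and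
`f_zz` is orthogonal to `f_z`. Since the derivatives of `N` are tangent, the last term vanishes and
in the first one only the `f_z̄`-component of `N_z̄` matters, which is `-H` because
`⟨N_z̄, f_z⟩ = -⟨N, f_{z z̄}⟩`; the first two terms cancel.
In dimension three the derivatives of `N` are tangent because `⟨N, N⟩` is constant.
-/

/-- The derivative of `g` along the complexified vector field `a ∂_x + b ∂_y`. -/
def complexDirDeriv {V : Type*} [NormedAddCommGroup V] [NormedSpace ℝ V] [NormedSpace ℂ V]
    (a b : ℂ) (g : ℂ → V) (z : ℂ) : V :=
  a • fderiv ℝ g z 1 + b • fderiv ℝ g z I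

/-- The partial derivative `∂_x`. -/
local notation "D_x" => complexDirDeriv 1 0

/-- The partial derivative `∂_y`. -/
local notation "D_y" => complexDirDeriv 0 1

/-- The Wirtinger derivative `∂_z`. -/
local notation "D_z" => complexDirDeriv 2⁻¹ (-(2⁻¹ * I))

/-- The Wirtinger derivative `∂_z̄`. -/
local notation "D_zb" => complexDirDeriv 2⁻¹ (2⁻¹ * I)

section ComplexDirDeriv

variable {V W : Type*} [NormedAddCommGroup V] [NormedSpace ℝ V] [NormedSpace ℂ V]
  [NormedAddCommGroup W] [NormedSpace ℝ W] [NormedSpace ℂ W] {S : Set ℂ} {z : ℂ} {g h : ℂ → V}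

theorem wirtinger_eq : D_z g z = (2⁻¹ : ℂ) • (D_x g z - I • D_y g z) := by
  simp only [complexDirDeriv]
  module

theorem wirtingerBar_eq : D_zb g z = (2⁻¹ : ℂ) • (D_x g z + I • D_y g z) := by
  simp only [complexDirDeriv]
  module

theorem partialX_eq_wirtinger : D_x g z = D_z g z + D_zb g z := by
  simp only [complexDirDeriv]
  module

theorem partialY_eq_wirtinger : D_y g z = I • (D_z g z - D_zb g z) := by
  have hII : I • (D_z g z - D_zb g z) = (-(I * I)) • D_y g z := by
    simp only [complexDirDeriv]
    module
  rw [hII, I_mul_I, neg_neg, one_smul]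

theorem complexDirDeriv_congr (hS : IsOpen S) (hgh : Set.EqOn g h S) (hz : z ∈ S) (a b : ℂ) :
    complexDirDeriv a b g z = complexDirDeriv a b h z := by
  simp only [complexDirDeriv, (hgh.eventuallyEq_of_mem (hS.mem_nhds hz)).fderiv_eq]

theorem complexDirDeriv_eq_zero_of_const {v : V} (hS : IsOpen S) (hg : ∀ w ∈ S, g w = v)
    (hz : z ∈ S) (a b : ℂ) : complexDirDeriv a b g z = 0 := by
  rw [complexDirDeriv_congr hS hg hz]
  simp [complexDirDeriv]

variable [IsScalarTower ℝ ℂ V]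

theorem complexDirDeriv_contDiffOn {m n : WithTop ℕ∞} (hS : IsOpen S) (hg : ContDiffOn ℝ n g S)
    (hmn : m + 1 ≤ n) (a b : ℂ) : ContDiffOn ℝ m (complexDirDeriv a b g) S := by
  have hfderiv := hg.fderiv_of_isOpen hS hmn
  exact ((hfderiv.clm_apply contDiffOn_const).const_smul a).add
    ((hfderiv.clm_apply contDiffOn_const).const_smul b)

theorem complexDirDeriv_differentiableAt (hS : IsOpen S) (hg : ContDiffOn ℝ 2 g S) (hz : z ∈ S)
    (a b : ℂ) : DifferentiableAt ℝ (complexDirDeriv a b g) z :=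
  ((complexDirDeriv_contDiffOn (m := 1) hS hg (by norm_num) a b).contDiffAt
    (hS.mem_nhds hz)).differentiableAt one_ne_zero

theorem complexDirDeriv_complexDirDeriv (hg : ContDiffAt ℝ 2 g z) (a b c d : ℂ) :
    complexDirDeriv a b (complexDirDeriv c d g) z =
      (a * c) • fderiv ℝ (fderiv ℝ g) z 1 1 + (a * d + b * c) • fderiv ℝ (fderiv ℝ g) z 1 I +
        (b * d) • fderiv ℝ (fderiv ℝ g) z I I := by
  have hdiff : DifferentiableAt ℝ (fderiv ℝ g) z :=
    (hg.fderiv_right (m := 1) (by norm_num)).differentiableAt one_ne_zero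
  have hsymm : fderiv ℝ (fderiv ℝ g) z I 1 = fderiv ℝ (fderiv ℝ g) z 1 I :=
    (hg.isSymmSndFDerivAt (by simp)).eq I 1
  have hfderiv (v : ℂ) : fderiv ℝ (complexDirDeriv c d g) z v =
      c • fderiv ℝ (fderiv ℝ g) z v 1 + d • fderiv ℝ (fderiv ℝ g) z v I := by
    have hsum : HasFDerivAt (complexDirDeriv c d g) _ z :=
      ((hdiff.hasFDerivAt.clm_apply (hasFDerivAt_const 1 z)).const_smul c).add
        ((hdiff.hasFDerivAt.clm_apply (hasFDerivAt_const I z)).const_smul d)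
    simp [hsum.fderiv]
  rw [complexDirDeriv, hfderiv, hfderiv, hsymm]
  module

theorem complexDirDeriv_comm (hg : ContDiffAt ℝ 2 g z) (a b c d : ℂ) :
    complexDirDeriv a b (complexDirDeriv c d g) z =
      complexDirDeriv c d (complexDirDeriv a b g) z := by
  rw [complexDirDeriv_complexDirDeriv hg, complexDirDeriv_complexDirDeriv hg]
  module

theorem partialXX_add_partialYY_eq_wirtinger (hg : ContDiffAt ℝ 2 g z) :
    D_x (D_x g) z + D_y (D_y g) z = (4 : ℂ) • D_zb (D_z g) z := by
  have hII : (2⁻¹ * I) * -(2⁻¹ * I) = (4⁻¹ : ℂ) := by linear_combination (-4⁻¹ : ℂ) * I_mul_I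
  simp only [complexDirDeriv_complexDirDeriv hg, hII]
  module

variable [IsScalarTower ℝ ℂ W]

theorem complexDirDeriv_clm_apply (L : V →L[ℂ] W) (hg : DifferentiableAt ℝ g z) (a b : ℂ) :
    complexDirDeriv a b (fun w => L (g w)) z = L (complexDirDeriv a b g z) := by
  have hL : HasFDerivAt (fun w => L (g w)) _ z :=
    (L.restrictScalars ℝ).hasFDerivAt.comp z hg.hasFDerivAt
  simp [complexDirDeriv, hL.fderiv]

theorem complexDirDeriv_bilinear (B : V →L[ℂ] V →L[ℂ] W) (hg : DifferentiableAt ℝ g z)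
    (hh : DifferentiableAt ℝ h z) (a b : ℂ) :
    complexDirDeriv a b (fun w => B (g w) (h w)) z =
      B (complexDirDeriv a b g z) (h z) + B (g z) (complexDirDeriv a b h z) := by
  have hB := (B.bilinearRestrictScalars ℝ).fderiv_of_bilinear hg hh
  simp only [ContinuousLinearMap.bilinearRestrictScalars_apply_apply] at hB
  simp only [complexDirDeriv, hB, ContinuousLinearMap.precompR_apply,
    ContinuousLinearMap.precompL_apply, ContinuousLinearMap.compL_apply,
    ContinuousLinearMap.comp_apply, ContinuousLinearMap.bilinearRestrictScalars_apply_apply,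
    _root_.add_apply, _root_.smul_apply, map_add, map_smul, smul_add]
  module

end ComplexDirDeriv

section ParallelNormal

variable {V : Type*} [NormedAddCommGroup V] [NormedSpace ℝ V] [NormedSpace ℂ V]
  {B : V →L[ℂ] V →L[ℂ] ℂ} {f N : ℂ → V} {S : Set ℂ} {z : ℂ}

/-- `f` is a conformal immersion of `S` into a complex vector space with symmetric bilinear form
`B`, and `N` is a normal field along `f` that is parallel in the normal bundle: its derivatives are
(complexified) tangent vectors. A real Euclidean target is covered by its complexification. -/
structure IsConformalWithParallelNormal (B : V →L[ℂ] V →L[ℂ] ℂ) (f N : ℂ → V) (S : Set ℂ) :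
    Prop where
  symm : ∀ X Y, B X Y = B Y X
  apply_x_x : ∀ z ∈ S, B (D_x f z) (D_x f z) = B (D_y f z) (D_y f z)
  apply_x_y : ∀ z ∈ S, B (D_x f z) (D_y f z) = 0
  apply_x_x_ne_zero : ∀ z ∈ S, B (D_x f z) (D_x f z) ≠ 0
  normal_x : ∀ z ∈ S, B (N z) (D_x f z) = 0
  normal_y : ∀ z ∈ S, B (N z) (D_y f z) = 0
  differentiableAt : ∀ z ∈ S, DifferentiableAt ℝ N z
  parallel : ∀ z ∈ S, ∀ a b : ℂ, complexDirDeriv a b N z ∈ Submodule.span ℂ {D_x f z, D_y f z}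

namespace IsConformalWithParallelNormal

theorem apply_z_z (hN : IsConformalWithParallelNormal B f N S) (hz : z ∈ S) :
    B (D_z f z) (D_z f z) = 0 := by
  simp only [wirtinger_eq, map_smul, map_sub, _root_.smul_apply, _root_.sub_apply, smul_eq_mul,
    hN.symm (D_y f z) (D_x f z), hN.apply_x_x z hz, hN.apply_x_y z hz]
  linear_combination (4⁻¹ : ℂ) * B (D_y f z) (D_y f z) * I_mul_I

theorem apply_zb_zb (hN : IsConformalWithParallelNormal B f N S) (hz : z ∈ S) :
    B (D_zb f z) (D_zb f z) = 0 := by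
  simp only [wirtingerBar_eq, map_smul, map_add, _root_.smul_apply, _root_.add_apply, smul_eq_mul,
    hN.symm (D_y f z) (D_x f z), hN.apply_x_x z hz, hN.apply_x_y z hz]
  linear_combination (4⁻¹ : ℂ) * B (D_y f z) (D_y f z) * I_mul_I

theorem apply_z_zb (hN : IsConformalWithParallelNormal B f N S) (hz : z ∈ S) :
    B (D_z f z) (D_zb f z) = 2⁻¹ * B (D_x f z) (D_x f z) := by
  simp only [wirtinger_eq, wirtingerBar_eq, map_smul, map_add, map_sub, _root_.smul_apply,
    _root_.sub_apply, smul_eq_mul, hN.symm (D_y f z) (D_x f z), hN.apply_x_x z hz,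
    hN.apply_x_y z hz]
  linear_combination -(4⁻¹ : ℂ) * B (D_y f z) (D_y f z) * I_mul_I

theorem normal_z (hN : IsConformalWithParallelNormal B f N S) (hz : z ∈ S) :
    B (N z) (D_z f z) = 0 := by
  simp [wirtinger_eq, hN.normal_x z hz, hN.normal_y z hz]

theorem exists_eq_smul_z_add_smul_zb (hN : IsConformalWithParallelNormal B f N S) (hz : z ∈ S)
    (a b : ℂ) : ∃ s t : ℂ, complexDirDeriv a b N z = s • D_z f z + t • D_zb f z := by
  obtain ⟨s, t, hst⟩ := Submodule.mem_span_pair.1 (hN.parallel z hz a b)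
  refine ⟨s + t * I, s - t * I, ?_⟩
  rw [← hst, partialX_eq_wirtinger, partialY_eq_wirtinger]
  module

variable [IsScalarTower ℝ ℂ V]

theorem apply_z_complexDirDeriv_z (hN : IsConformalWithParallelNormal B f N S) (hS : IsOpen S)
    (hf : ContDiffOn ℝ 2 f S) (hz : z ∈ S) (a b : ℂ) :
    B (D_z f z) (complexDirDeriv a b (D_z f) z) = 0 := by
  have hdiff := complexDirDeriv_differentiableAt hS hf hz 2⁻¹ (-(2⁻¹ * I))
  have hnull := complexDirDeriv_eq_zero_of_const hS (fun w hw => hN.apply_z_z hw) hz a b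
  rw [complexDirDeriv_bilinear B hdiff hdiff, hN.symm (complexDirDeriv a b (D_z f) z)] at hnull
  linear_combination (2⁻¹ : ℂ) * hnull

theorem apply_zb_z_zb (hN : IsConformalWithParallelNormal B f N S) (hS : IsOpen S)
    (hf : ContDiffOn ℝ 2 f S) (hz : z ∈ S) :
    B (D_zb f z) (D_zb (D_z f) z) = 0 := by
  have hdiff := complexDirDeriv_differentiableAt hS hf hz 2⁻¹ (2⁻¹ * I)
  have hnull := complexDirDeriv_eq_zero_of_const hS (fun w hw => hN.apply_zb_zb hw) hz
    2⁻¹ (-(2⁻¹ * I))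
  rw [complexDirDeriv_bilinear B hdiff hdiff, hN.symm (D_z (D_zb f) z),
    complexDirDeriv_comm (hf.contDiffAt (hS.mem_nhds hz))] at hnull
  linear_combination (2⁻¹ : ℂ) * hnull

theorem wirtinger_apply_z_zb (hN : IsConformalWithParallelNormal B f N S) (hS : IsOpen S)
    (hf : ContDiffOn ℝ 2 f S) (hz : z ∈ S) :
    D_z (fun w => B (D_z f w) (D_zb f w)) z = B (D_z (D_z f) z) (D_zb f z) := by
  rw [complexDirDeriv_bilinear B (complexDirDeriv_differentiableAt hS hf hz _ _)
      (complexDirDeriv_differentiableAt hS hf hz _ _),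
    complexDirDeriv_comm (hf.contDiffAt (hS.mem_nhds hz)) _ _ 2⁻¹ (2⁻¹ * I),
    hN.apply_z_complexDirDeriv_z hS hf hz, add_zero]

theorem complexDirDeriv_normal_apply_z_zb (hN : IsConformalWithParallelNormal B f N S)
    (hS : IsOpen S) (hf : ContDiffOn ℝ 2 f S) (hz : z ∈ S) (a b : ℂ) :
    B (complexDirDeriv a b N z) (D_zb (D_z f) z) = 0 := by
  obtain ⟨s, t, hst⟩ := hN.exists_eq_smul_z_add_smul_zb hz a b
  simp [hst, hN.apply_z_complexDirDeriv_z hS hf hz, hN.apply_zb_z_zb hS hf hz]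

theorem complexDirDeriv_normal_apply_z (hN : IsConformalWithParallelNormal B f N S) (hS : IsOpen S)
    (hf : ContDiffOn ℝ 2 f S) (hz : z ∈ S) (a b : ℂ) :
    B (complexDirDeriv a b N z) (D_z f z) = -B (N z) (complexDirDeriv a b (D_z f) z) := by
  have hnormal := complexDirDeriv_eq_zero_of_const hS (fun w hw => hN.normal_z hw) hz a b
  rw [complexDirDeriv_bilinear B (hN.differentiableAt z hz)
    (complexDirDeriv_differentiableAt hS hf hz _ _)] at hnormal
  exact eq_neg_of_add_eq_zero_left hnormal

theorem wirtingerBar_normal_apply_z_z (hN : IsConformalWithParallelNormal B f N S) (hS : IsOpen S)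
    (hf : ContDiffOn ℝ 2 f S) (hz : z ∈ S) {c : ℂ}
    (hH : B (N z) (D_zb (D_z f) z) = c * B (D_z f z) (D_zb f z)) :
    B (D_zb N z) (D_z (D_z f) z) = -c * B (D_z (D_z f) z) (D_zb f z) := by
  obtain ⟨s, t, hst⟩ := hN.exists_eq_smul_z_add_smul_zb hz 2⁻¹ (2⁻¹ * I)
  have hne : B (D_z f z) (D_zb f z) ≠ 0 := by
    simpa [hN.apply_z_zb hz] using hN.apply_x_x_ne_zero z hz
  have ht : t = -c := by
    have hshape := hN.complexDirDeriv_normal_apply_z hS hf hz 2⁻¹ (2⁻¹ * I)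
    simp only [hst, hH, map_add, map_smul, _root_.add_apply, _root_.smul_apply, smul_eq_mul,
      hN.apply_z_z hz, hN.symm (D_zb f z) (D_z f z)] at hshape
    exact mul_right_cancel₀ hne (by linear_combination hshape)
  simp [hst, ht, hN.apply_z_complexDirDeriv_z hS hf hz, hN.symm (D_zb f z)]

theorem normal_apply_wirtinger_z_zb (hN : IsConformalWithParallelNormal B f N S) (hS : IsOpen S)
    (hf : ContDiffOn ℝ 3 f S) (hz : z ∈ S) {c : ℂ}
    (hH : ∀ w ∈ S, B (N w) (D_zb (D_z f) w) = c * B (D_z f w) (D_zb f w)) :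
    B (N z) (D_z (D_zb (D_z f)) z) = c * B (D_z (D_z f) z) (D_zb f z) := by
  have hf₂ : ContDiffOn ℝ 2 f S := hf.of_le (by norm_num)
  have hfz : ContDiffOn ℝ 2 (D_z f) S := complexDirDeriv_contDiffOn hS hf (by norm_num) _ _
  have hpair : DifferentiableAt ℝ (fun w => B (D_z f w) (D_zb f w)) z :=
    ((B.bilinearRestrictScalars ℝ).hasFDerivAt_of_bilinear
      (complexDirDeriv_differentiableAt hS hf₂ hz _ _).hasFDerivAt
      (complexDirDeriv_differentiableAt hS hf₂ hz _ _).hasFDerivAt).differentiableAt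
  have hdiff := complexDirDeriv_congr hS hH hz 2⁻¹ (-(2⁻¹ * I))
  rw [complexDirDeriv_bilinear B (hN.differentiableAt z hz)
      (complexDirDeriv_differentiableAt hS hfz hz _ _),
    hN.complexDirDeriv_normal_apply_z_zb hS hf₂ hz, zero_add] at hdiff
  rw [hdiff, ← hN.wirtinger_apply_z_zb hS hf₂ hz]
  exact complexDirDeriv_clm_apply (c • ContinuousLinearMap.id ℂ ℂ) hpair _ _

theorem wirtingerBar_hopf_eq_zero (hN : IsConformalWithParallelNormal B f N S) (hS : IsOpen S)
    (hf : ContDiffOn ℝ 3 f S) (hz : z ∈ S) {c : ℂ}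
    (hH : ∀ w ∈ S, B (N w) (D_zb (D_z f) w) = c * B (D_z f w) (D_zb f w)) :
    D_zb (fun w => B (N w) (D_z (D_z f) w)) z = 0 := by
  have hf₂ : ContDiffOn ℝ 2 f S := hf.of_le (by norm_num)
  have hfz : ContDiffOn ℝ 2 (D_z f) S := complexDirDeriv_contDiffOn hS hf (by norm_num) _ _
  calc D_zb (fun w => B (N w) (D_z (D_z f) w)) z
      = B (D_zb N z) (D_z (D_z f) z) + B (N z) (D_z (D_zb (D_z f)) z) := by
        rw [complexDirDeriv_bilinear B (hN.differentiableAt z hz)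
            (complexDirDeriv_differentiableAt hS hfz hz _ _),
          complexDirDeriv_comm (hfz.contDiffAt (hS.mem_nhds hz))]
    _ = -c * B (D_z (D_z f) z) (D_zb f z) + c * B (D_z (D_z f) z) (D_zb f z) := by
        rw [hN.wirtingerBar_normal_apply_z_z hS hf₂ hz (hH z hz),
          hN.normal_apply_wirtinger_z_zb hS hf hz hH]
    _ = 0 := by ring

end IsConformalWithParallelNormal

end ParallelNormal

section TraceForm

variable {A X : M2}

theorem ip_comm (X Y : M2) : ip X Y = ip Y X := by
  rw [ip, ip, trace_mul_comm]

/-- The form `ip` as a continuous complex bilinear map. -/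
def ipBilin : M2 →L[ℂ] M2 →L[ℂ] ℂ :=
  (LinearMap.mk₂ ℂ ip
    (fun X Y Z => by simp only [ip, add_mul, trace_add, mul_add])
    (fun c X Y => by simp only [ip, Matrix.smul_mul, trace_smul, smul_eq_mul]; ring)
    (fun X Y Z => by simp only [ip, mul_add, trace_add])
    (fun c X Y => by
      simp only [ip, Matrix.mul_smul, trace_smul, smul_eq_mul]; ring)).toContinuousBilinearMap

theorem ipBilin_apply (X Y : M2) : ipBilin X Y = ip X Y := rfl

theorem ip_smul_left (c : ℂ) (X Y : M2) : ip (c • X) Y = c * ip X Y := by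
  simp [← ipBilin_apply]

theorem ip_smul_right (c : ℂ) (X Y : M2) : ip X (c • Y) = c * ip X Y := by
  simp [← ipBilin_apply]

theorem complexDirDeriv_ip {g h : ℂ → M2} {z : ℂ} (hg : DifferentiableAt ℝ g z)
    (hh : DifferentiableAt ℝ h z) (a b : ℂ) :
    complexDirDeriv a b (fun w => ip (g w) (h w)) z =
      ip (complexDirDeriv a b g z) (h z) + ip (g z) (complexDirDeriv a b h z) :=
  complexDirDeriv_bilinear ipBilin hg hh a b

theorem complexDirDeriv_trace {n : Type*} [Fintype n] {g : ℂ → Matrix n n ℂ} {z : ℂ}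
    (hg : DifferentiableAt ℝ g z) (a b : ℂ) :
    complexDirDeriv a b (fun w => (g w).trace) z = (complexDirDeriv a b g z).trace :=
  complexDirDeriv_clm_apply (traceLinearMap n ℂ ℂ).toContinuousLinearMap hg a b

theorem eq_sum_ip_smul_of_trace_eq_zero (hX : X.trace = 0) :
    X = ip X e1 • e1 + ip X e2 • e2 + ip X e3 • e3 := by
  have hdiag : X 1 1 = -X 0 0 := by
    rw [trace_fin_two] at hX
    linear_combination hX
  ext i j
  fin_cases i <;> fin_cases j <;>
    simp [ip, e1, e2, e3, trace_fin_two, mul_apply, Fin.sum_univ_two, hdiag] <;>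
    ring_nf <;> simp <;> ring

theorem conj_mul_conj {n R : Type*} [Fintype n] [DecidableEq n] [CommRing R] {A : Matrix n n R}
    (hA : IsUnit A) (X Y : Matrix n n R) :
    A * X * A⁻¹ * (A * Y * A⁻¹) = A * (X * Y) * A⁻¹ := by
  simp only [Matrix.mul_assoc, nonsing_inv_mul_cancel_left _ _ ((isUnit_iff_isUnit_det A).1 hA)]

theorem ip_conj (hA : IsUnit A) (X Y : M2) : ip (A * X * A⁻¹) (A * Y * A⁻¹) = ip X Y := by
  rw [ip, conj_mul_conj hA, trace_conj hA, ip]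

theorem eq_sum_ip_conj_smul_of_trace_eq_zero (hA : IsUnit A) (hX : X.trace = 0) :
    X = ip X (A * e1 * A⁻¹) • (A * e1 * A⁻¹) + ip X (A * e2 * A⁻¹) • (A * e2 * A⁻¹) +
      ip X (A * e3 * A⁻¹) • (A * e3 * A⁻¹) := by
  have hdet : IsUnit A.det := (isUnit_iff_isUnit_det A).1 hA
  obtain ⟨Y, rfl⟩ : ∃ Y, X = A * Y * A⁻¹ := ⟨A⁻¹ * X * A, by
    simp only [Matrix.mul_assoc, mul_nonsing_inv_cancel_left _ _ hdet, mul_nonsing_inv _ hdet,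
      Matrix.mul_one]⟩
  rw [trace_conj hA] at hX
  simp only [ip_conj hA]
  conv_lhs => rw [eq_sum_ip_smul_of_trace_eq_zero hX]
  simp only [Matrix.mul_add, Matrix.add_mul, Matrix.mul_smul, Matrix.smul_mul]

end TraceForm

section AdaptedFrame

variable {f F : ℂ → M2} {r : ℂ → ℂ} {S : Set ℂ} {z : ℂ}

theorem px_eq (g : ℂ → M2) : px g = D_x g := by
  ext1 z
  rw [complexDirDeriv, one_smul, zero_smul, add_zero]
  rfl

theorem py_eq (g : ℂ → M2) : py g = D_y g := by
  ext1 z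
  rw [complexDirDeriv, zero_smul, one_smul, zero_add]
  rfl

theorem dz_eq (g : ℂ → M2) : dz g = D_z g := by
  ext1 z
  rw [dz, px_eq, py_eq, wirtinger_eq]

theorem dzbC_eq (q : ℂ → ℂ) : dzbC q = D_zb q := by
  ext1 z
  simp only [dzbC, pxC, pyC, complexDirDeriv, smul_eq_mul]
  ring

/-- The frame `F` is adapted to the immersion `f` on `S`: conjugation by `F` takes `e1` and `e2` to
`f_x` and `f_y`, both rescaled to unit length by the factor `r`. The frame takes values in the
invertible matrices, so that `f` may also be a complex conformal map into `sl(2, ℂ)`. -/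
structure IsAdaptedFrame (f F : ℂ → M2) (r : ℂ → ℂ) (S : Set ℂ) : Prop where
  isUnit : ∀ z ∈ S, IsUnit (F z)
  conj_e1 : ∀ z ∈ S, F z * e1 * (F z)⁻¹ = r z • px f z
  conj_e2 : ∀ z ∈ S, F z * e2 * (F z)⁻¹ = r z • py f z

/-- The normal field `N = F e₃ F⁻¹` of a frame. -/
def frameNormal (F : ℂ → M2) (z : ℂ) : M2 := F z * e3 * (F z)⁻¹

theorem ip_frameNormal_frameNormal (hF : IsUnit (F z)) :
    ip (frameNormal F z) (frameNormal F z) = 1 := by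
  rw [frameNormal, ip_conj hF]
  norm_num [ip, e3, trace_fin_two]

theorem trace_frameNormal (hF : IsUnit (F z)) : (frameNormal F z).trace = 0 := by
  rw [frameNormal, trace_conj hF]
  simp [e3, trace_fin_two]

namespace IsAdaptedFrame

theorem sq_mul_ip_px_px (hF : IsAdaptedFrame f F r S) (hz : z ∈ S) :
    r z ^ 2 * ip (px f z) (px f z) = 1 := by
  have h := ip_conj (hF.isUnit z hz) e1 e1
  have he : ip e1 e1 = 1 := by norm_num [ip, e1, trace_fin_two]
  rw [hF.conj_e1 z hz, ip_smul_left, ip_smul_right, he] at h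
  linear_combination h

theorem sq_mul_ip_py_py (hF : IsAdaptedFrame f F r S) (hz : z ∈ S) :
    r z ^ 2 * ip (py f z) (py f z) = 1 := by
  have h := ip_conj (hF.isUnit z hz) e2 e2
  have he : ip e2 e2 = 1 := by norm_num [ip, e2, trace_fin_two]
  rw [hF.conj_e2 z hz, ip_smul_left, ip_smul_right, he] at h
  linear_combination h

theorem factor_ne_zero (hF : IsAdaptedFrame f F r S) (hz : z ∈ S) : r z ≠ 0 := by
  intro h
  simpa [h] using hF.sq_mul_ip_px_px hz

theorem ip_px_py (hF : IsAdaptedFrame f F r S) (hz : z ∈ S) : ip (px f z) (py f z) = 0 := by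
  have h := ip_conj (hF.isUnit z hz) e1 e2
  have he : ip e1 e2 = 0 := by simp [ip, e1, e2, trace_fin_two]
  rw [hF.conj_e1 z hz, hF.conj_e2 z hz, ip_smul_left, ip_smul_right, he] at h
  simpa [hF.factor_ne_zero hz] using h

theorem ip_normal_px (hF : IsAdaptedFrame f F r S) (hz : z ∈ S) :
    ip (frameNormal F z) (px f z) = 0 := by
  have h := ip_conj (hF.isUnit z hz) e3 e1
  have he : ip e3 e1 = 0 := by simp [ip, e1, e3, trace_fin_two]
  rw [hF.conj_e1 z hz, ip_smul_right, he, ← frameNormal] at h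
  simpa [hF.factor_ne_zero hz] using h

theorem ip_normal_py (hF : IsAdaptedFrame f F r S) (hz : z ∈ S) :
    ip (frameNormal F z) (py f z) = 0 := by
  have h := ip_conj (hF.isUnit z hz) e3 e2
  have he : ip e3 e2 = 0 := by simp [ip, e2, e3, trace_fin_two]
  rw [hF.conj_e2 z hz, ip_smul_right, he, ← frameNormal] at h
  simpa [hF.factor_ne_zero hz] using h

theorem normal_eq_smul_px_mul_py (hF : IsAdaptedFrame f F r S) (hz : z ∈ S) :
    frameNormal F z = (ip (px f z) (px f z))⁻¹ • (px f z * py f z) := by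
  have he : e1 * e2 = e3 := by
    ext i j
    fin_cases i <;> fin_cases j <;> simp [e1, e2, e3]
  rw [frameNormal, ← he, ← conj_mul_conj (hF.isUnit z hz), hF.conj_e1 z hz, hF.conj_e2 z hz,
    smul_mul_smul_comm, ← sq, eq_inv_of_mul_eq_one_left (hF.sq_mul_ip_px_px hz)]

theorem ip_px_px_ne_zero (hF : IsAdaptedFrame f F r S) (hz : z ∈ S) : ip (px f z) (px f z) ≠ 0 :=
  right_ne_zero_of_mul_eq_one (hF.sq_mul_ip_px_px hz)

theorem differentiableAt_normal (hF : IsAdaptedFrame f F r S) (hS : IsOpen S)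
    (hf : ContDiffOn ℝ 2 f S) (hz : z ∈ S) :
    DifferentiableAt ℝ (frameNormal F) z := by
  have hpx : DifferentiableAt ℝ (px f) z := by
    rw [px_eq]
    exact complexDirDeriv_differentiableAt hS hf hz _ _
  have hpy : DifferentiableAt ℝ (py f) z := by
    rw [py_eq]
    exact complexDirDeriv_differentiableAt hS hf hz _ _
  have hip : DifferentiableAt ℝ (fun w => ip (px f w) (px f w)) z :=
    ((ipBilin.bilinearRestrictScalars ℝ).hasFDerivAt_of_bilinear hpx.hasFDerivAt
      hpx.hasFDerivAt).differentiableAt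
  have hcross : Set.EqOn (frameNormal F)
      (fun w => (ip (px f w) (px f w))⁻¹ • (px f w * py f w)) S :=
    fun w hw => hF.normal_eq_smul_px_mul_py hw
  exact ((hip.inv (hF.ip_px_px_ne_zero hz)).smul (hpx.mul hpy)).congr_of_eventuallyEq
    (hcross.eventuallyEq_of_mem (hS.mem_nhds hz))

theorem mem_span_of_trace_eq_zero_of_ip_normal_eq_zero (hF : IsAdaptedFrame f F r S) {X : M2}
    (hz : z ∈ S) (hX : X.trace = 0) (hXN : ip X (frameNormal F z) = 0) :
    X ∈ Submodule.span ℂ {px f z, py f z} := by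
  rw [eq_sum_ip_conj_smul_of_trace_eq_zero (hF.isUnit z hz) hX, hF.conj_e1 z hz, hF.conj_e2 z hz,
    ← frameNormal, hXN, zero_smul, add_zero, smul_smul, smul_smul]
  exact Submodule.mem_span_pair.2 ⟨_, _, rfl⟩

theorem complexDirDeriv_normal_mem_span (hF : IsAdaptedFrame f F r S) (hS : IsOpen S)
    (hf : ContDiffOn ℝ 2 f S) (hz : z ∈ S) (a b : ℂ) :
    complexDirDeriv a b (frameNormal F) z ∈ Submodule.span ℂ {px f z, py f z} := by
  have hdiff := hF.differentiableAt_normal hS hf hz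
  apply hF.mem_span_of_trace_eq_zero_of_ip_normal_eq_zero hz
  · have htrace := complexDirDeriv_eq_zero_of_const hS
      (fun w hw => trace_frameNormal (hF.isUnit w hw)) hz a b
    rwa [complexDirDeriv_trace hdiff] at htrace
  · have hunit := complexDirDeriv_eq_zero_of_const hS
      (fun w hw => ip_frameNormal_frameNormal (hF.isUnit w hw)) hz a b
    rw [complexDirDeriv_ip hdiff hdiff, ip_comm (frameNormal F z)] at hunit
    linear_combination (2⁻¹ : ℂ) * hunit

theorem isConformalWithParallelNormal (hF : IsAdaptedFrame f F r S) (hS : IsOpen S)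
    (hf : ContDiffOn ℝ 2 f S) :
    IsConformalWithParallelNormal ipBilin f (frameNormal F) S where
  symm := ip_comm
  apply_x_x z hz := by
    rw [← px_eq, ← py_eq]
    exact mul_left_cancel₀ (pow_ne_zero 2 (hF.factor_ne_zero hz))
      ((hF.sq_mul_ip_px_px hz).trans (hF.sq_mul_ip_py_py hz).symm)
  apply_x_y z hz := by
    rw [← px_eq, ← py_eq]
    exact hF.ip_px_py hz
  apply_x_x_ne_zero z hz := by
    rw [← px_eq]
    exact hF.ip_px_px_ne_zero hz
  normal_x z hz := by
    rw [← px_eq]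
    exact hF.ip_normal_px hz
  normal_y z hz := by
    rw [← py_eq]
    exact hF.ip_normal_py hz
  differentiableAt z hz := hF.differentiableAt_normal hS hf hz
  parallel z hz a b := by
    rw [← px_eq, ← py_eq]
    exact hF.complexDirDeriv_normal_mem_span hS hf hz a b

theorem ip_normal_z_zb (hF : IsAdaptedFrame f F r S) (hS : IsOpen S) (hf : ContDiffOn ℝ 2 f S)
    (hz : z ∈ S) {c : ℂ}
    (hH : r z ^ 2 / 2 * ip (px (px f) z + py (py f) z) (frameNormal F z) = c) :
    ip (frameNormal F z) (D_zb (D_z f) z) = c * ip (D_z f z) (D_zb f z) := by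
  have hsq : r z ^ 2 * ip (D_x f z) (D_x f z) = 1 := by
    rw [← px_eq]
    exact hF.sq_mul_ip_px_px hz
  have hzzb : ip (D_z f z) (D_zb f z) = 2⁻¹ * ip (D_x f z) (D_x f z) :=
    (hF.isConformalWithParallelNormal hS hf).apply_z_zb hz
  simp only [px_eq, py_eq] at hH
  rw [partialXX_add_partialYY_eq_wirtinger (hf.contDiffAt (hS.mem_nhds hz)), ip_smul_left,
    ip_comm] at hH
  rw [hzzb]
  linear_combination 2⁻¹ * ip (D_x f z) (D_x f z) * hH -
    ip (frameNormal F z) (D_zb (D_z f) z) * hsq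

end IsAdaptedFrame

theorem hopf_differential_holomorphic_general (hS : IsOpen S) (hf : ContDiffOn ℝ 3 f S)
    (hF : IsAdaptedFrame f F r S) {c : ℂ}
    (hH : ∀ z ∈ S, r z ^ 2 / 2 * ip (px (px f) z + py (py f) z) (frameNormal F z) = c) :
    ∀ z ∈ S, dzbC (fun w => ip (frameNormal F w) (dz (dz f) w)) z = 0 := by
  intro z hz
  have hf₂ : ContDiffOn ℝ 2 f S := hf.of_le (by norm_num)
  simp only [dzbC_eq, dz_eq]
  exact (hF.isConformalWithParallelNormal hS hf₂).wirtingerBar_hopf_eq_zero hS hf hz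
    fun w hw => hF.ip_normal_z_zb hS hf₂ hw (hH w hw)

end AdaptedFrame

/-- for a conformal immersion with constant mean curvature, the Hopf
differential coefficient `Q = ⟨N, f_zz⟩` is holomorphic, i.e. `∂_z̄ Q = 0`. -/
theorem hopf_differential_holomorphic
    (S : Set ℂ) (hS : IsOpen S)
    (f : ℂ → M2) (u : ℂ → ℝ) (F : ℂ → M2)
    (hf : ContDiffOn ℝ (⊤ : ℕ∞) f S)
    (hu : ContDiffOn ℝ (⊤ : ℕ∞) u S)
    (hF : ContDiffOn ℝ (⊤ : ℕ∞) F S)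
    (hsu2 : ∀ z ∈ S, (f z)ᴴ = -(f z) ∧ (f z).trace = 0)
    (hconf : ∀ z ∈ S,
      ip (px f z) (px f z) = ((4 * Real.exp (2 * u z) : ℝ) : ℂ) ∧
      ip (py f z) (py f z) = ((4 * Real.exp (2 * u z) : ℝ) : ℂ) ∧
      ip (px f z) (py f z) = 0)
    (hFunit : ∀ z ∈ S, (F z)ᴴ * F z = 1 ∧ (F z).det = 1)
    (hFe1 : ∀ z ∈ S, F z * e1 * (F z)⁻¹ = (((2 * Real.exp (u z))⁻¹ : ℝ) : ℂ) • px f z)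
    (hFe2 : ∀ z ∈ S, F z * e2 * (F z)⁻¹ = (((2 * Real.exp (u z))⁻¹ : ℝ) : ℂ) • py f z)
    (N : ℂ → M2) (hN : ∀ z, N z = F z * e3 * (F z)⁻¹)
    (Q : ℂ → ℂ) (hQ : ∀ z, Q z = ip (N z) (dz (dz f) z))
    (H : ℂ → ℂ)
    (hH : ∀ z, H z = (((8 * Real.exp (2 * u z))⁻¹ : ℝ) : ℂ) *
      ip (px (px f) z + py (py f) z) (N z))
    (hHconst : ∃ c : ℂ, ∀ z ∈ S, H z = c) :
    ∀ z ∈ S, dzbC Q z = 0 := by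
  obtain ⟨c, hc⟩ := hHconst
  obtain rfl : N = frameNormal F := funext hN
  obtain rfl : Q = fun z => ip (frameNormal F z) (dz (dz f) z) := funext hQ
  have hframe : IsAdaptedFrame f F (fun z => (((2 * Real.exp (u z))⁻¹ : ℝ) : ℂ)) S :=
    ⟨fun z hz => (isUnit_iff_isUnit_det _).2 (by simp [(hFunit z hz).2]), hFe1, hFe2⟩
  refine hopf_differential_holomorphic_general hS (hf.of_le (WithTop.coe_le_coe.2 le_top)) hframe
    (c := c) fun z hz => ?_
  rw [← hc z hz, hH, two_mul (u z), Real.exp_add]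
  push_cast
  ring
end
end
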